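/- (Extension of the main theorem, uniform in λ) Let n ≥ 1, δ ∈ (0,1), α ∈ [0,1], and let P be a fixed prior on H. Then with probability at least 1−δ over draws of D_n, the following holds simultaneously for all posteriors Q on H and all λ ∈ (0,1): |R(π_Q) − R̂_n^α(π_Q)| ≤ √(KL1'(π_Q,λ)/(2n)) + B_n^α(π_Q) + KL2'(π_Q,λ)/(nλ) + (λ/2)·V̄_n^α(π_Q), where KL1'(π_Q,λ) = D_KL(Q‖P) + log(8√n/(δλ)) and KL2'(π_Q,λ) = 2(D_KL(Q‖P) + log(8/(δλ))). -/

import Mathlib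

open MeasureTheory ProbabilityTheory Real

open Classical in
/-- Kullback–Leibler divergence between two measures, valued in `ℝ≥0∞` (junk value `⊤` when
`Q` is not absolutely continuous w.r.t. `P` or the log-likelihood ratio is not integrable). -/
noncomputable def klDiv {α : Type*} [MeasurableSpace α] (Q P : Measure α) : ENNReal :=
  if Q ≪ P ∧ Integrable (llr Q P) Q then ENNReal.ofReal (∫ x, llr Q P x ∂Q) else ⊤

/-
Insert, between the true risk and the importance-weighted estimate, the average cost of `π_Q` over
the observed contexts, and then the same average with the cost of the action `a` shrunk by the
factor `π₀(a|x)^(1 - α)`, as the weighting shrinks it in expectation.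
- True risk against average cost: for a fixed `h` the deviation `D` is sub-Gaussian, and
  `E exp (2 n D²) ≤ 4 √n`.
- Average cost against shrunk cost: at most `Bₙ^α`, without any probability.
- Shrunk cost against estimate: for a fixed `h` this is a centred sum of independent `Yᵢ - mᵢ`, and
  `exp (x - x² / 2) ≤ 1 + x + x² / 2` gives, without boundedness of the weights,
  `E exp (s ∑ (Yᵢ - mᵢ) - s² / 2 ∑ (Yᵢ² + E Yᵢ²)) ≤ 1` for every real `s`.
The Donsker–Varadhan inequality and Markov's inequality turn an exponential moment bound for each
`h` into a bound simultaneous in `Q`. A union bound over `s = 2⁻¹, 2⁻², …` makes the last one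
simultaneous in `λ`, at the price of `log (1 / λ)`.
-/

section Subgaussian

variable {Ω : Type*} [MeasurableSpace Ω] {μ : Measure Ω}

lemma lintegral_exp_mul_sq_gaussianReal {v : NNReal} {c : ℝ} (hcv : c * v < 1) :
    ∫⁻ s, ENNReal.ofReal (exp (c * s ^ 2 / 2)) ∂gaussianReal 0 v
      = ENNReal.ofReal (√(1 - c * v))⁻¹ := by
  rcases eq_or_ne v 0 with rfl | hv
  · simp [gaussianReal_zero_var]
  have : (0 : ℝ) < v := by positivity
  have hb : 0 < (1 - c * v) / (2 * v) := div_pos (by linarith) (by positivity)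
  have hdensity : ∀ s : ℝ, gaussianPDFReal 0 v s • exp (c * s ^ 2 / 2)
      = (√(2 * π * v))⁻¹ * exp (-((1 - c * v) / (2 * v)) * s ^ 2) := by
    intro s
    rw [gaussianPDFReal, smul_eq_mul, mul_assoc, ← exp_add]
    congr 2
    field_simp
    ring
  have hint : Integrable (fun s => exp (c * s ^ 2 / 2)) (gaussianReal 0 v) := by
    rw [gaussianReal_of_var_ne_zero _ hv, integrable_withDensity_iff_integrable_smul₀'
      (by fun_prop) (by simp [gaussianPDF])]
    simp only [toReal_gaussianPDF, hdensity]
    exact (integrable_exp_neg_mul_sq hb).const_mul _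
  rw [← ofReal_integral_eq_lintegral_ofReal hint (.of_forall fun s => (exp_pos _).le),
    integral_gaussianReal_eq_integral_smul hv]
  simp only [hdensity]
  rw [integral_const_mul, integral_gaussian, ← sqrt_inv, ← sqrt_inv, ← sqrt_mul (by positivity)]
  congr 2
  have : 1 - c * v ≠ 0 := by linarith
  field_simp

lemma ofReal_exp_mul_sq_eq_lintegral_gaussianReal (v : NNReal) (x : ℝ) :
    ENNReal.ofReal (exp (v * x ^ 2 / 2))
      = ∫⁻ s, ENNReal.ofReal (exp (x * s)) ∂gaussianReal 0 v := by
  rw [← ofReal_integral_eq_lintegral_ofReal (integrable_exp_mul_gaussianReal x)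
    (.of_forall fun s => (exp_pos _).le)]
  congr 1
  simpa [mgf] using (congrFun (mgf_id_gaussianReal (μ := 0) (v := v)) x).symm

/- Averaging the sub-Gaussian bound on the moment generating function over a centred Gaussian
parameter linearises the square. -/
lemma lintegral_exp_mul_sq_le_of_hasSubgaussianMGF [SFinite μ] {X : Ω → ℝ} {c v : NNReal}
    (hX : HasSubgaussianMGF X c μ) (hcv : c * v < 1) :
    ∫⁻ ω, ENNReal.ofReal (exp (v * X ω ^ 2 / 2)) ∂μ ≤ ENNReal.ofReal (√(1 - c * v))⁻¹ := by
  have hX' : AEMeasurable (fun q : Ω × ℝ => X q.1) (μ.prod (gaussianReal 0 v)) :=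
    hX.aemeasurable.comp_fst
  calc ∫⁻ ω, ENNReal.ofReal (exp (v * X ω ^ 2 / 2)) ∂μ
      = ∫⁻ ω, ∫⁻ s, ENNReal.ofReal (exp (X ω * s)) ∂gaussianReal 0 v ∂μ := by
        simp only [ofReal_exp_mul_sq_eq_lintegral_gaussianReal]
    _ = ∫⁻ s, ∫⁻ ω, ENNReal.ofReal (exp (X ω * s)) ∂μ ∂gaussianReal 0 v :=
        lintegral_lintegral_swap (hX'.mul measurable_snd.aemeasurable).exp.ennreal_ofReal
    _ ≤ ∫⁻ s, ENNReal.ofReal (exp (c * s ^ 2 / 2)) ∂gaussianReal 0 v := by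
        refine lintegral_mono fun s => ?_
        simp only [mul_comm (X _) s]
        rw [← ofReal_integral_eq_lintegral_ofReal (hX.integrable_exp_mul s)
          (.of_forall fun ω => (exp_pos _).le)]
        exact ENNReal.ofReal_le_ofReal (hX.mgf_le s)
    _ = ENNReal.ofReal (√(1 - c * v))⁻¹ :=
        lintegral_exp_mul_sq_gaussianReal (by exact_mod_cast hcv)

lemma hasSubgaussianMGF_sampleMean_sub_integral {ι : Type*} [Fintype ι] [Nonempty ι]
    [IsProbabilityMeasure μ] {f : Ω → ℝ} (hf : Measurable f) {lo hi : ℝ}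
    (hmem : ∀ z, f z ∈ Set.Icc lo hi) :
    HasSubgaussianMGF
      (fun ω : ι → Ω => (Fintype.card ι : ℝ)⁻¹ * ∑ i, f (ω i) - ∫ z, f z ∂μ)
      ((‖hi - lo‖₊ / 2) ^ 2 / Fintype.card ι) (Measure.pi fun _ => μ) := by
  have hcoord : HasSubgaussianMGF (fun z => f z - ∫ z, f z ∂μ) ((‖hi - lo‖₊ / 2) ^ 2) μ :=
    hasSubgaussianMGF_of_mem_Icc hf.aemeasurable (.of_forall hmem)
  have hsum := (HasSubgaussianMGF.sum_of_iIndepFun (s := Finset.univ)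
    (iIndepFun_pi (μ := fun _ : ι => μ) fun _ => hcoord.aemeasurable) fun i _ =>
      HasSubgaussianMGF.of_map (measurable_pi_apply i).aemeasurable
        (by rwa [(measurePreserving_eval (fun _ : ι => μ) i).map_eq])).const_mul
    (Fintype.card ι : ℝ)⁻¹
  have hcard : (Fintype.card ι : ℝ) ≠ 0 := by exact_mod_cast Fintype.card_ne_zero
  convert hsum using 1
  · ext ω
    simp [Finset.sum_sub_distrib, mul_sub, hcard]
  · ext
    change _ = (Fintype.card ι : ℝ)⁻¹ ^ 2 * ((∑ _ : ι, (‖hi - lo‖₊ / 2) ^ 2 : NNReal) : ℝ)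
    push_cast
    simp only [Finset.sum_const, Finset.card_univ, nsmul_eq_mul]
    field_simp

lemma abs_sampleMean_sub_integral_le {ι : Type*} [Fintype ι] [Nonempty ι]
    [IsProbabilityMeasure μ] {f : Ω → ℝ} (hf : Measurable f) {lo hi : ℝ}
    (hmem : ∀ z, f z ∈ Set.Icc lo hi) (ω : ι → Ω) :
    |(Fintype.card ι : ℝ)⁻¹ * ∑ i, f (ω i) - ∫ z, f z ∂μ| ≤ hi - lo := by
  have hint : Integrable f μ := .of_mem_Icc lo hi hf.aemeasurable (.of_forall hmem)
  have hmean : ∫ z, f z ∂μ ∈ Set.Icc lo hi :=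
    (convex_Icc lo hi).integral_mem isClosed_Icc (.of_forall hmem) hint
  have hsample : (Fintype.card ι : ℝ)⁻¹ * ∑ i, f (ω i) ∈ Set.Icc lo hi := by
    rw [Finset.mul_sum]
    exact (convex_Icc lo hi).sum_mem (w := fun _ => (Fintype.card ι : ℝ)⁻¹)
      (fun _ _ => by positivity) (by simp) fun i _ => hmem (ω i)
  exact abs_sub_le_of_le_of_le hsample.1 hsample.2 hmean.1 hmean.2

lemma exp_two_mul_mul_sq_le {d : ℝ} (hd : |d| ≤ 1) (n : ℝ) :
    exp (2 * n * d ^ 2) ≤ 2 * exp ((4 * n - 1) * d ^ 2 / 2) := by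
  have hexp : exp (1 / 2) ≤ 2 := by
    rw [← le_log_iff_exp_le two_pos]
    linarith [log_two_gt_d9]
  calc exp (2 * n * d ^ 2) ≤ exp (1 / 2 + (4 * n - 1) * d ^ 2 / 2) := by
        gcongr
        linarith [(sq_le_one_iff_abs_le_one d).2 hd]
    _ ≤ 2 * exp ((4 * n - 1) * d ^ 2 / 2) := by
        rw [exp_add]
        gcongr

/- The sub-Gaussian parameter is `1 / (4n)`, so the coefficient `4n / 2` itself is just out of
reach; `4n - 1` is not, and the deviation being at most `1` the difference costs a factor
`exp (1 / 2) ≤ 2`. -/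
lemma lintegral_exp_two_mul_card_mul_sq_le {ι : Type*} [Fintype ι] [Nonempty ι]
    [IsProbabilityMeasure μ] {f : Ω → ℝ} (hf : Measurable f) {lo : ℝ}
    (hmem : ∀ z, f z ∈ Set.Icc lo (lo + 1)) :
    ∫⁻ ω : ι → Ω, ENNReal.ofReal (exp (2 * Fintype.card ι *
        ((Fintype.card ι : ℝ)⁻¹ * ∑ i, f (ω i) - ∫ z, f z ∂μ) ^ 2)) ∂(Measure.pi fun _ => μ)
      ≤ ENNReal.ofReal (4 * √(Fintype.card ι)) := by
  have hsub := hasSubgaussianMGF_sampleMean_sub_integral (ι := ι) (μ := μ) hf hmem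
  have hbound := abs_sampleMean_sub_integral_le (ι := ι) (μ := μ) hf hmem
  set n : ℝ := (Fintype.card ι : ℝ) with hn
  set D : (ι → Ω) → ℝ := fun ω => n⁻¹ * ∑ i, f (ω i) - ∫ z, f z ∂μ
  have hn1 : 1 ≤ n := Nat.one_le_cast.2 Fintype.card_pos
  obtain ⟨v, hv⟩ : ∃ v : NNReal, (v : ℝ) = 4 * n - 1 := ⟨⟨4 * n - 1, by linarith⟩, rfl⟩
  have hcv : (((‖lo + 1 - lo‖₊ / 2) ^ 2 / Fintype.card ι : NNReal) : ℝ) * v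
      = 1 - 1 / (4 * n) := by
    simp only [add_sub_cancel_left, nnnorm_one, NNReal.coe_div, NNReal.coe_pow, NNReal.coe_one,
      NNReal.coe_ofNat, NNReal.coe_natCast, hv, ← hn]
    field_simp
    ring
  have hsqrt : (√(1 - (1 - 1 / (4 * n))))⁻¹ = 2 * √n := by
    rw [sub_sub_cancel, one_div, sqrt_inv, inv_inv, sqrt_mul (by norm_num)]
    norm_num
  have hpoint (ω : ι → Ω) : exp (2 * n * D ω ^ 2) ≤ 2 * exp (v * D ω ^ 2 / 2) := by
    rw [hv]
    exact exp_two_mul_mul_sq_le (by simpa using hbound ω) n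
  calc ∫⁻ ω, ENNReal.ofReal (exp (2 * n * D ω ^ 2)) ∂(Measure.pi fun _ => μ)
      ≤ ∫⁻ ω, 2 * ENNReal.ofReal (exp (v * D ω ^ 2 / 2)) ∂(Measure.pi fun _ => μ) := by
        refine lintegral_mono fun ω => (ENNReal.ofReal_le_ofReal (hpoint ω)).trans_eq ?_
        rw [ENNReal.ofReal_mul zero_le_two, ENNReal.ofReal_ofNat]
    _ ≤ 2 * ENNReal.ofReal (2 * √n) := by
        rw [lintegral_const_mul' _ _ ENNReal.ofNat_ne_top, ← hsqrt, ← hcv]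
        gcongr
        refine lintegral_exp_mul_sq_le_of_hasSubgaussianMGF hsub ?_
        rw [← NNReal.coe_lt_coe, NNReal.coe_mul, hcv, NNReal.coe_one]
        linarith [show 0 < 1 / (4 * n) by positivity]
    _ = ENNReal.ofReal (4 * √n) := by
        rw [← ENNReal.ofReal_ofNat 2, ← ENNReal.ofReal_mul zero_le_two]
        ring_nf

end Subgaussian

section SelfNormalized

variable {Ω : Type*} [MeasurableSpace Ω] {μ : Measure Ω}

lemma exp_sub_sq_div_two_le (x : ℝ) : exp (x - x ^ 2 / 2) ≤ 1 + x + x ^ 2 / 2 := by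
  have hpos : 0 < 1 - x + x ^ 2 / 2 := by nlinarith [sq_nonneg (x - 1)]
  have hprod : 1 ≤ (1 + x + x ^ 2 / 2) * (1 - x + x ^ 2 / 2) := by nlinarith [sq_nonneg (x ^ 2)]
  calc exp (x - x ^ 2 / 2) = (exp (x ^ 2 / 2 - x))⁻¹ := by rw [← exp_neg, neg_sub]
    _ ≤ (1 - x + x ^ 2 / 2)⁻¹ := by
        gcongr
        linarith [add_one_le_exp (x ^ 2 / 2 - x)]
    _ ≤ 1 + x + x ^ 2 / 2 := by rwa [inv_le_iff_one_le_mul₀ hpos]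

lemma exp_selfNormalized_le (y m s v : ℝ) : exp (s * (y - m) - s ^ 2 / 2 * (y ^ 2 + v))
    ≤ exp (-(s * m + s ^ 2 / 2 * v)) * (1 + s * y + s ^ 2 / 2 * y ^ 2) :=
  calc exp (s * (y - m) - s ^ 2 / 2 * (y ^ 2 + v))
      = exp (-(s * m + s ^ 2 / 2 * v)) * exp (s * y - (s * y) ^ 2 / 2) := by
        rw [← exp_add]
        ring_nf
    _ ≤ exp (-(s * m + s ^ 2 / 2 * v)) * (1 + s * y + (s * y) ^ 2 / 2) := by
        gcongr
        exact exp_sub_sq_div_two_le _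
    _ = exp (-(s * m + s ^ 2 / 2 * v)) * (1 + s * y + s ^ 2 / 2 * y ^ 2) := by ring

lemma lintegral_exp_selfNormalized_le_one [IsProbabilityMeasure μ] {Y : Ω → ℝ}
    (hY : MemLp Y 2 μ) {v : ℝ} (hv : ∫ ω, Y ω ^ 2 ∂μ ≤ v) (s : ℝ) :
    ∫⁻ ω, ENNReal.ofReal
      (exp (s * (Y ω - ∫ ω, Y ω ∂μ) - s ^ 2 / 2 * (Y ω ^ 2 + v))) ∂μ ≤ 1 := by
  set m := ∫ ω, Y ω ∂μ
  set C := exp (-(s * m + s ^ 2 / 2 * v)) with hC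
  have hY1 : Integrable (fun ω => s * Y ω) μ := (hY.integrable one_le_two).const_mul s
  have hY2 : Integrable (fun ω => s ^ 2 / 2 * Y ω ^ 2) μ := hY.integrable_sq.const_mul _
  have hlin : Integrable (fun ω => 1 + s * Y ω) μ := (integrable_const 1).add hY1
  have hint : Integrable (fun ω => C * (1 + s * Y ω + s ^ 2 / 2 * Y ω ^ 2)) μ :=
    (hlin.add hY2).const_mul C
  have hpoint (ω : Ω) : exp (s * (Y ω - m) - s ^ 2 / 2 * (Y ω ^ 2 + v))
      ≤ C * (1 + s * Y ω + s ^ 2 / 2 * Y ω ^ 2) := exp_selfNormalized_le _ m s v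
  have hmean : ∫ ω, C * (1 + s * Y ω + s ^ 2 / 2 * Y ω ^ 2) ∂μ
      = C * (1 + s * m + s ^ 2 / 2 * ∫ ω, Y ω ^ 2 ∂μ) := by
    rw [integral_const_mul, integral_add hlin hY2,
      integral_add (integrable_const 1) hY1, integral_const_mul, integral_const_mul]
    simp [m]
  calc ∫⁻ ω, ENNReal.ofReal (exp (s * (Y ω - m) - s ^ 2 / 2 * (Y ω ^ 2 + v))) ∂μ
      ≤ ∫⁻ ω, ENNReal.ofReal (C * (1 + s * Y ω + s ^ 2 / 2 * Y ω ^ 2)) ∂μ :=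
        lintegral_mono fun ω => ENNReal.ofReal_le_ofReal (hpoint ω)
    _ = ENNReal.ofReal (C * (1 + s * m + s ^ 2 / 2 * ∫ ω, Y ω ^ 2 ∂μ)) := by
        rw [← hmean, ofReal_integral_eq_lintegral_ofReal hint
          (.of_forall fun ω => (exp_pos _).le.trans (hpoint ω))]
    _ ≤ ENNReal.ofReal (C * exp (s * m + s ^ 2 / 2 * v)) := by
        gcongr
        nlinarith [add_one_le_exp (s * m + s ^ 2 / 2 * v),
          mul_le_mul_of_nonneg_left hv (by positivity : 0 ≤ s ^ 2 / 2)]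
    _ = 1 := by rw [hC, ← exp_add, neg_add_cancel, exp_zero, ENNReal.ofReal_one]

lemma lintegral_exp_selfNormalized_compProd_le_one {X A : Type*} [MeasurableSpace X]
    [MeasurableSpace A] {ν : Measure X} [IsProbabilityMeasure ν] {κ : Kernel X A}
    [IsMarkovKernel κ] {Y : X × A → ℝ} (hY : Measurable Y)
    (hY2 : ∀ x, MemLp (fun a => Y (x, a)) 2 (κ x)) {v : X → ℝ} (hv : Measurable v)
    (hYv : ∀ x, ∫ a, Y (x, a) ^ 2 ∂κ x ≤ v x) (s : ℝ) :
    ∫⁻ z, ENNReal.ofReal (exp (s * (Y z - ∫ a, Y (z.1, a) ∂κ z.1)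
      - s ^ 2 / 2 * (Y z ^ 2 + v z.1))) ∂(ν ⊗ₘ κ) ≤ 1 := by
  have hmean : Measurable fun z : X × A => ∫ a, Y (z.1, a) ∂κ z.1 :=
    hY.stronglyMeasurable.integral_kernel_prod_right'.measurable.comp measurable_fst
  have : Measurable fun z : X × A => v z.1 := hv.comp measurable_fst
  rw [Measure.lintegral_compProd (by fun_prop)]
  calc _ ≤ ∫⁻ _, 1 ∂ν :=
        lintegral_mono fun x => lintegral_exp_selfNormalized_le_one (hY2 x) (hYv x) s
    _ = 1 := by simp

lemma lintegral_exp_sum_pi_le_one {ι : Type*} [Fintype ι] [IsProbabilityMeasure μ]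
    {f : Ω → ℝ} (hf : Measurable f) (hle : ∫⁻ z, ENNReal.ofReal (exp (f z)) ∂μ ≤ 1) :
    ∫⁻ ω : ι → Ω, ENNReal.ofReal (exp (∑ i, f (ω i))) ∂(Measure.pi fun _ => μ) ≤ 1 := by
  have hexp : Measurable fun z => ENNReal.ofReal (exp (f z)) := by fun_prop
  simp only [exp_sum, ENNReal.ofReal_prod_of_nonneg fun _ _ => (exp_pos _).le]
  rw [lintegral_prod_eq_prod_lintegral_of_indepFun Finset.univ
    (fun i (ω : ι → Ω) => ENNReal.ofReal (exp (f (ω i))))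
    (iIndepFun_pi (μ := fun _ : ι => μ) fun _ => hexp.aemeasurable)
    fun i => hexp.comp (measurable_pi_apply i)]
  refine Finset.prod_le_one' fun i _ => ?_
  rwa [(measurePreserving_eval (fun _ : ι => μ) i).lintegral_comp hexp]

lemma lintegral_exp_selfNormalized_sum_pi_le_one {X A ι : Type*} [MeasurableSpace X]
    [MeasurableSpace A] [Fintype ι] {ν : Measure X} [IsProbabilityMeasure ν] {κ : Kernel X A}
    [IsMarkovKernel κ] {Y : X × A → ℝ} (hY : Measurable Y)
    (hY2 : ∀ x, MemLp (fun a => Y (x, a)) 2 (κ x)) {v : X → ℝ} (hv : Measurable v)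
    (hYv : ∀ x, ∫ a, Y (x, a) ^ 2 ∂κ x ≤ v x) (s : ℝ) :
    ∫⁻ ω : ι → X × A, ENNReal.ofReal (exp (s * ∑ i, (Y (ω i) - ∫ a, Y ((ω i).1, a) ∂κ (ω i).1)
      - s ^ 2 / 2 * ∑ i, (Y (ω i) ^ 2 + v (ω i).1))) ∂(Measure.pi fun _ => ν ⊗ₘ κ) ≤ 1 := by
  have hmean : Measurable fun z : X × A => ∫ a, Y (z.1, a) ∂κ z.1 :=
    hY.stronglyMeasurable.integral_kernel_prod_right'.measurable.comp measurable_fst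
  have : Measurable fun z : X × A => v z.1 := hv.comp measurable_fst
  simp only [Finset.mul_sum, ← Finset.sum_sub_distrib]
  exact lintegral_exp_sum_pi_le_one
    (f := fun z => s * (Y z - ∫ a, Y (z.1, a) ∂κ z.1) - s ^ 2 / 2 * (Y z ^ 2 + v z.1))
    (by fun_prop) (lintegral_exp_selfNormalized_compProd_le_one hY hY2 hv hYv s)

end SelfNormalized

section PACBayes

variable {Ω H : Type*} [MeasurableSpace Ω] [MeasurableSpace H]

/- Donsker–Varadhan: the divergence of `Q` from the tilted measure `P.tilted f` is nonnegative. -/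
lemma integral_le_toReal_klDiv_add_log_integral_exp {Q P : Measure H} [IsProbabilityMeasure Q]
    [IsProbabilityMeasure P] {f : H → ℝ} (hKL : InformationTheory.klDiv Q P ≠ ⊤)
    (hf : Integrable f Q) (hexp : Integrable (fun h => exp (f h)) P) :
    ∫ h, f h ∂Q ≤ (InformationTheory.klDiv Q P).toReal + log (∫ h, exp (f h) ∂P) := by
  obtain ⟨hac, hllr⟩ := InformationTheory.klDiv_ne_top_iff.1 hKL
  have := isProbabilityMeasure_tilted hexp
  have htilted : 0 ≤ ∫ h, llr Q (P.tilted f) h ∂Q := by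
    simpa using InformationTheory.integral_llr_add_sub_measure_univ_nonneg
      (hac.trans (absolutelyContinuous_tilted hexp)) (integrable_llr_tilted_right hac hf hllr hexp)
  rw [integral_llr_tilted_right hac hf hexp hllr] at htilted
  rw [InformationTheory.toReal_klDiv_of_measure_eq hac (by simp)]
  linarith

lemma integral_le_toReal_klDiv_add_log_of_lintegral_exp_le {Q P : Measure H}
    [IsProbabilityMeasure Q] [IsProbabilityMeasure P] {f : H → ℝ}
    (hKL : InformationTheory.klDiv Q P ≠ ⊤) (hf : Integrable f Q) (hfm : Measurable f) {M : ℝ}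
    (hM : ∫⁻ h, ENNReal.ofReal (exp (f h)) ∂P ≤ ENNReal.ofReal M) :
    ∫ h, f h ∂Q ≤ (InformationTheory.klDiv Q P).toReal + log M := by
  have hexp : Integrable (fun h => exp (f h)) P :=
    lintegral_ofReal_ne_top_iff_integrable (by fun_prop) (.of_forall fun h => (exp_pos _).le)
      |>.1 (hM.trans_lt ENNReal.ofReal_lt_top).ne
  have hpos : 0 < ∫ h, exp (f h) ∂P := integral_exp_pos hexp
  have hle : ∫ h, exp (f h) ∂P ≤ M := by
    rw [← ofReal_integral_eq_lintegral_ofReal hexp (.of_forall fun h => (exp_pos _).le)] at hM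
    exact ENNReal.ofReal_le_ofReal_iff' |>.1 hM |>.resolve_right hpos.not_ge
  have hlog := log_le_log hpos hle
  linarith [integral_le_toReal_klDiv_add_log_integral_exp hKL hf hexp]

lemma measure_compl_forall_integral_le_klDiv_add_log_le {μ : Measure Ω} [SFinite μ]
    (P : Measure H) [IsProbabilityMeasure P] {F : Ω → H → ℝ}
    (hF : Measurable (Function.uncurry F)) {B δ : ℝ} (hB : 0 < B) (hδ : 0 < δ)
    (hFB : ∀ h, ∫⁻ ω, ENNReal.ofReal (exp (F ω h)) ∂μ ≤ ENNReal.ofReal B) :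
    μ {ω | ∀ Q : Measure H, IsProbabilityMeasure Q → InformationTheory.klDiv Q P ≠ ⊤ →
      Integrable (F ω) Q →
      ∫ h, F ω h ∂Q ≤ (InformationTheory.klDiv Q P).toReal + log (B / δ)}ᶜ
      ≤ ENNReal.ofReal δ := by
  have hexp : Measurable fun q : Ω × H => ENNReal.ofReal (exp (F q.1 q.2)) :=
    hF.exp.ennreal_ofReal
  calc _ ≤ μ {ω | ENNReal.ofReal (B / δ) ≤ ∫⁻ h, ENNReal.ofReal (exp (F ω h)) ∂P} := by
        refine measure_mono (Set.compl_subset_comm.1 fun ω hω Q _ hKL hQ => ?_)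
        exact integral_le_toReal_klDiv_add_log_of_lintegral_exp_le hKL hQ
          (hF.comp measurable_prodMk_left) (le_of_not_ge hω)
    _ ≤ (∫⁻ ω, ∫⁻ h, ENNReal.ofReal (exp (F ω h)) ∂P ∂μ) / ENNReal.ofReal (B / δ) :=
        meas_ge_le_lintegral_div hexp.lintegral_prod_right'.aemeasurable
          (ENNReal.ofReal_pos.2 (div_pos hB hδ)).ne' ENNReal.ofReal_ne_top
    _ ≤ ENNReal.ofReal B / ENNReal.ofReal (B / δ) := by
        rw [lintegral_lintegral_swap hexp.aemeasurable]
        gcongr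
        calc ∫⁻ h, ∫⁻ ω, ENNReal.ofReal (exp (F ω h)) ∂μ ∂P ≤ ∫⁻ _, ENNReal.ofReal B ∂P :=
              lintegral_mono hFB
          _ = ENNReal.ofReal B := by simp
    _ = ENNReal.ofReal δ := by
        rw [← ENNReal.ofReal_div_of_pos (div_pos hB hδ), div_div_cancel₀ hB.ne']

lemma sq_integral_le_integral_sq {Q : Measure H} [IsProbabilityMeasure Q] {f : H → ℝ}
    (hf : MemLp f 2 Q) : (∫ h, f h ∂Q) ^ 2 ≤ ∫ h, f h ^ 2 ∂Q := by
  have hvar := variance_nonneg f Q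
  rw [variance_eq_sub hf] at hvar
  simpa using hvar

lemma ofReal_one_sub_add_le_measure_inter {μ : Measure Ω}
    [IsProbabilityMeasure μ] {s t : Set Ω} {a b : ℝ} (ha : 0 ≤ a) (hb : 0 ≤ b)
    (hs : μ sᶜ ≤ ENNReal.ofReal a) (ht : μ tᶜ ≤ ENNReal.ofReal b) :
    ENNReal.ofReal (1 - (a + b)) ≤ μ (s ∩ t) := by
  rw [ENNReal.ofReal_sub _ (add_nonneg ha hb), ENNReal.ofReal_one, tsub_le_iff_right,
    ENNReal.ofReal_add ha hb]
  calc 1 ≤ μ (s ∩ t) + μ (s ∩ t)ᶜ := measure_univ (μ := μ) ▸ measure_univ_le_add_compl _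
    _ ≤ μ (s ∩ t) + (ENNReal.ofReal a + ENNReal.ofReal b) := by
        rw [Set.compl_inter]
        gcongr
        exact (measure_union_le _ _).trans (add_le_add hs ht)

end PACBayes

section UniformBounds

variable {Ω H : Type*} [MeasurableSpace Ω] [MeasurableSpace H] {μ : Measure Ω}
  (P : Measure H) [IsProbabilityMeasure P]

lemma measure_compl_forall_abs_integral_sampleMean_sub_le [IsProbabilityMeasure μ]
    {ι : Type*} [Fintype ι] [Nonempty ι] {ℓ : H → Ω → ℝ} (hℓ : Measurable (Function.uncurry ℓ))
    {lo : ℝ} (hmem : ∀ h z, ℓ h z ∈ Set.Icc lo (lo + 1)) {δ : ℝ} (hδ : 0 < δ) :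
    (Measure.pi fun _ : ι => μ) {ω | ∀ Q : Measure H, IsProbabilityMeasure Q →
      InformationTheory.klDiv Q P ≠ ⊤ →
      |∫ h, ((Fintype.card ι : ℝ)⁻¹ * ∑ i, ℓ h (ω i) - ∫ z, ℓ h z ∂μ) ∂Q|
        ≤ √(((InformationTheory.klDiv Q P).toReal + log (4 * √(Fintype.card ι) / δ))
          / (2 * Fintype.card ι))}ᶜ ≤ ENNReal.ofReal δ := by
  set D : (ι → Ω) → H → ℝ :=
    fun ω h => (Fintype.card ι : ℝ)⁻¹ * ∑ i, ℓ h (ω i) - ∫ z, ℓ h z ∂μ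
  have : (0 : ℝ) < Fintype.card ι := Nat.cast_pos.2 Fintype.card_pos
  have hD : Measurable (Function.uncurry D) := by
    have hmean : Measurable fun h => ∫ z, ℓ h z ∂μ :=
      hℓ.stronglyMeasurable.integral_prod_right.measurable
    have hcoord (i : ι) : Measurable fun q : (ι → Ω) × H => ℓ q.2 (q.1 i) :=
      hℓ.comp (measurable_snd.prodMk ((measurable_pi_apply i).comp measurable_fst))
    exact ((Finset.measurable_sum _ fun i _ => hcoord i).const_mul _).sub
      (hmean.comp measurable_snd)
  refine (measure_mono (Set.compl_subset_compl.2 ?_)).trans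
    (measure_compl_forall_integral_le_klDiv_add_log_le P
      (F := fun ω h => 2 * Fintype.card ι * D ω h ^ 2) ((hD.pow_const 2).const_mul _)
      (by positivity) hδ fun h =>
        lintegral_exp_two_mul_card_mul_sq_le (hℓ.comp measurable_prodMk_left) (hmem h))
  intro ω hω Q _ hKL
  have hD2 : MemLp (D ω) 2 Q :=
    .of_bound (hD.comp measurable_prodMk_left).aestronglyMeasurable (lo + 1 - lo) <|
      .of_forall fun h =>
        abs_sampleMean_sub_integral_le (hℓ.comp measurable_prodMk_left) (hmem h) ω
  have hsq := hω Q ‹_› hKL (hD2.integrable_sq.const_mul _)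
  rw [integral_const_mul] at hsq
  refine abs_le_sqrt ((sq_integral_le_integral_sq hD2).trans ?_)
  rwa [le_div_iff₀' (by positivity)]

lemma lintegral_exp_mul_abs_sub_le_two {X Y : Ω → ℝ} (hX : Measurable X) (hY : Measurable Y)
    (hXY : ∀ s, ∫⁻ ω, ENNReal.ofReal (exp (s * X ω - s ^ 2 / 2 * Y ω)) ∂μ ≤ 1)
    {s : ℝ} (hs : 0 ≤ s) :
    ∫⁻ ω, ENNReal.ofReal (exp (s * |X ω| - s ^ 2 / 2 * Y ω)) ∂μ ≤ ENNReal.ofReal 2 := by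
  have hpoint (ω : Ω) : exp (s * |X ω| - s ^ 2 / 2 * Y ω)
      ≤ exp (s * X ω - s ^ 2 / 2 * Y ω) + exp (-s * X ω - (-s) ^ 2 / 2 * Y ω) := by
    have habs : s * |X ω| = |s * X ω| := by rw [abs_mul, abs_of_nonneg hs]
    rw [habs, neg_sq, neg_mul, exp_sub, exp_sub, exp_sub, ← add_div]
    gcongr
    exact exp_abs_le _
  calc _ ≤ ∫⁻ ω, (ENNReal.ofReal (exp (s * X ω - s ^ 2 / 2 * Y ω))
          + ENNReal.ofReal (exp (-s * X ω - (-s) ^ 2 / 2 * Y ω))) ∂μ :=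
        lintegral_mono fun ω => (ENNReal.ofReal_le_ofReal (hpoint ω)).trans
          ENNReal.ofReal_add_le
    _ ≤ 1 + 1 := by
        rw [lintegral_add_left (by fun_prop)]
        exact add_le_add (hXY s) (hXY (-s))
    _ = ENNReal.ofReal 2 := by rw [one_add_one_eq_two, ENNReal.ofReal_ofNat]

variable {S V : Ω → H → ℝ}

lemma measure_compl_forall_mul_abs_integral_le [SFinite μ]
    (hS : Measurable (Function.uncurry S)) (hV : Measurable (Function.uncurry V))
    (hSV : ∀ s h, ∫⁻ ω, ENNReal.ofReal (exp (s * S ω h - s ^ 2 / 2 * V ω h)) ∂μ ≤ 1)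
    {s : ℝ} (hs : 0 ≤ s) {δ : ℝ} (hδ : 0 < δ) :
    μ {ω | ∀ Q : Measure H, IsProbabilityMeasure Q → InformationTheory.klDiv Q P ≠ ⊤ →
      Integrable (S ω) Q → Integrable (V ω) Q →
      s * |∫ h, S ω h ∂Q| ≤ (InformationTheory.klDiv Q P).toReal + log (2 / δ)
        + s ^ 2 / 2 * ∫ h, V ω h ∂Q}ᶜ ≤ ENNReal.ofReal δ := by
  have hmeas : Measurable (Function.uncurry fun ω h => s * |S ω h| - s ^ 2 / 2 * V ω h) :=
    (hS.abs.const_mul s).sub (hV.const_mul (s ^ 2 / 2))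
  refine (measure_mono (Set.compl_subset_compl.2 ?_)).trans
    (measure_compl_forall_integral_le_klDiv_add_log_le P
      hmeas two_pos hδ fun h => lintegral_exp_mul_abs_sub_le_two
        (hS.comp measurable_prodMk_right) (hV.comp measurable_prodMk_right) (hSV · h) hs)
  intro ω hω Q _ hKL hSQ hVQ
  have hbound := hω Q ‹_› hKL ((hSQ.abs.const_mul s).sub (hVQ.const_mul _))
  rw [integral_sub (hSQ.abs.const_mul s) (hVQ.const_mul _), integral_const_mul,
    integral_const_mul] at hbound
  have htri := mul_le_mul_of_nonneg_left (abs_integral_le_integral_abs (μ := Q) (f := S ω)) hs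
  linarith

lemma le_two_mul_div_add_of_mul_le {a w k δ s lam : ℝ} (hw : 0 ≤ w) (hk : 0 ≤ k)
    (hδ : δ ∈ Set.Ioc 0 1) (hs : 0 < s) (hlam : lam ≤ 1) (hslam : s < lam) (hlam2 : lam ≤ 2 * s)
    (h : s * a ≤ k + log (2 / (δ * s)) + s ^ 2 / 2 * w) :
    a ≤ 2 * (k + log (4 / (δ * lam))) / lam + lam / 2 * w := by
  obtain ⟨hδ0, hδ1⟩ := hδ
  have hlam0 : 0 < lam := hs.trans hslam
  have hlog : log (2 / (δ * s)) ≤ log (4 / (δ * lam)) := by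
    refine log_le_log (by positivity) ?_
    rw [div_le_div_iff₀ (by positivity) (by positivity)]
    nlinarith
  have hlog0 : 0 ≤ log (4 / (δ * lam)) := by
    refine log_nonneg ?_
    rw [one_le_div₀ (by positivity)]
    nlinarith
  calc a ≤ (k + log (4 / (δ * lam)) + s ^ 2 / 2 * w) / s := by
        rw [le_div_iff₀' hs]
        linarith
    _ = (k + log (4 / (δ * lam))) / s + s / 2 * w := by field_simp
    _ ≤ (k + log (4 / (δ * lam))) / (lam / 2) + lam / 2 * w := by
        gcongr
        linarith
    _ = 2 * (k + log (4 / (δ * lam))) / lam + lam / 2 * w := by field_simp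

/- In the union bound the scale `s = 2⁻¹, 2⁻², …` receives the failure probability `δ * s`; every
`λ ∈ (0, 1]` is within a factor `2` of one of the scales. -/
lemma measure_compl_forall_scale_abs_integral_le [SFinite μ]
    (hS : Measurable (Function.uncurry S)) (hV : Measurable (Function.uncurry V))
    (hV0 : ∀ ω h, 0 ≤ V ω h)
    (hSV : ∀ s h, ∫⁻ ω, ENNReal.ofReal (exp (s * S ω h - s ^ 2 / 2 * V ω h)) ∂μ ≤ 1)
    {δ : ℝ} (hδ : δ ∈ Set.Ioc 0 1) :
    μ {ω | ∀ Q : Measure H, IsProbabilityMeasure Q → InformationTheory.klDiv Q P ≠ ⊤ →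
      Integrable (S ω) Q → Integrable (V ω) Q → ∀ lam ∈ Set.Ioc (0 : ℝ) 1,
      |∫ h, S ω h ∂Q|
        ≤ 2 * ((InformationTheory.klDiv Q P).toReal + log (4 / (δ * lam))) / lam
          + lam / 2 * ∫ h, V ω h ∂Q}ᶜ ≤ ENNReal.ofReal δ := by
  set scale : ℕ → ℝ := fun k => (1 / 2) ^ (k + 1)
  have hscale (k : ℕ) : 0 < scale k := by positivity
  set good : ℕ → Set Ω := fun k => {ω | ∀ Q : Measure H, IsProbabilityMeasure Q →
    InformationTheory.klDiv Q P ≠ ⊤ → Integrable (S ω) Q → Integrable (V ω) Q →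
    scale k * |∫ h, S ω h ∂Q|
      ≤ (InformationTheory.klDiv Q P).toReal + log (2 / (δ * scale k))
        + scale k ^ 2 / 2 * ∫ h, V ω h ∂Q}
  have hgoodμ (k : ℕ) : μ (good k)ᶜ ≤ ENNReal.ofReal (δ * scale k) :=
    measure_compl_forall_mul_abs_integral_le P hS hV hSV (hscale k).le (mul_pos hδ.1 (hscale k))
  have hsum : HasSum (fun k => δ * scale k) δ := by
    simpa [scale, pow_succ] using (hasSum_geometric_two.mul_right 2⁻¹).mul_left δ
  calc _ ≤ μ (⋃ k, (good k)ᶜ) := by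
        rw [← Set.compl_iInter]
        refine measure_mono (Set.compl_subset_compl.2 fun ω hω Q hQ hKL hSQ hVQ lam hlam => ?_)
        obtain ⟨k, hlt, hle⟩ := exists_nat_pow_near_of_lt_one hlam.1 hlam.2
          (by norm_num : (0 : ℝ) < 1 / 2) (by norm_num)
        refine le_two_mul_div_add_of_mul_le (integral_nonneg (hV0 ω)) ENNReal.toReal_nonneg hδ
          (hscale k) hlam.2 hlt (hle.trans_eq ?_) (Set.mem_iInter.1 hω k Q hQ hKL hSQ hVQ)
        simp only [scale]
        ring
    _ ≤ ∑' k, μ (good k)ᶜ := measure_iUnion_le _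
    _ ≤ ∑' k, ENNReal.ofReal (δ * scale k) := ENNReal.tsum_le_tsum hgoodμ
    _ = ENNReal.ofReal δ := by
        rw [← ENNReal.ofReal_tsum_of_nonneg (fun k => (mul_pos hδ.1 (hscale k)).le) hsum.summable,
          hsum.tsum_eq]

lemma measure_compl_forall_scale_abs_integral_sampleMean_le {X A ι : Type*} [MeasurableSpace X]
    [MeasurableSpace A] [Fintype ι] [Nonempty ι] {ν : Measure X} [IsProbabilityMeasure ν]
    {κ : Kernel X A} [IsMarkovKernel κ] {Y : H → X × A → ℝ} {m v : H → X → ℝ}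
    (hY : Measurable (Function.uncurry Y)) (hm : Measurable (Function.uncurry m))
    (hv : Measurable (Function.uncurry v)) (hY2 : ∀ h x, MemLp (fun a => Y h (x, a)) 2 (κ x))
    (hYm : ∀ h x, ∫ a, Y h (x, a) ∂κ x = m h x) (hYv : ∀ h x, ∫ a, Y h (x, a) ^ 2 ∂κ x ≤ v h x)
    {δ : ℝ} (hδ : δ ∈ Set.Ioc 0 1) :
    (Measure.pi fun _ : ι => ν ⊗ₘ κ) {ω | ∀ Q : Measure H, IsProbabilityMeasure Q →
      InformationTheory.klDiv Q P ≠ ⊤ → (∀ i, Integrable (fun h => Y h (ω i) - m h (ω i).1) Q) →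
      (∀ i, Integrable (fun h => Y h (ω i) ^ 2 + v h (ω i).1) Q) → ∀ lam ∈ Set.Ioc (0 : ℝ) 1,
      |(Fintype.card ι : ℝ)⁻¹ * ∑ i, ∫ h, (Y h (ω i) - m h (ω i).1) ∂Q|
        ≤ 2 * ((InformationTheory.klDiv Q P).toReal + log (4 / (δ * lam))) / (Fintype.card ι * lam)
          + lam / 2 * ((Fintype.card ι : ℝ)⁻¹ * ∑ i, ∫ h, (Y h (ω i) ^ 2 + v h (ω i).1) ∂Q)}ᶜ
      ≤ ENNReal.ofReal δ := by
  have hpair (i : ι) : Measurable fun q : (ι → X × A) × H => (q.2, q.1 i) :=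
    measurable_snd.prodMk ((measurable_pi_apply i).comp measurable_fst)
  have hpair' (i : ι) : Measurable fun q : (ι → X × A) × H => (q.2, (q.1 i).1) :=
    measurable_snd.prodMk ((measurable_pi_apply i).comp measurable_fst).fst
  have hcard : (0 : ℝ) < Fintype.card ι := Nat.cast_pos.2 Fintype.card_pos
  refine (measure_mono (Set.compl_subset_compl.2 ?_)).trans
    (measure_compl_forall_scale_abs_integral_le P
      (S := fun ω h => ∑ i, (Y h (ω i) - m h (ω i).1))
      (V := fun ω h => ∑ i, (Y h (ω i) ^ 2 + v h (ω i).1))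
      (Finset.measurable_sum _ fun i _ => (hY.comp (hpair i)).sub (hm.comp (hpair' i)))
      (Finset.measurable_sum _ fun i _ => ((hY.comp (hpair i)).pow_const 2).add
        (hv.comp (hpair' i)))
      (fun ω h => Finset.sum_nonneg fun i _ => add_nonneg (sq_nonneg _)
        ((integral_nonneg fun _ => sq_nonneg _).trans (hYv h (ω i).1)))
      (fun s h => by
        simpa only [hYm] using lintegral_exp_selfNormalized_sum_pi_le_one (ι := ι) (ν := ν)
          (hY.of_uncurry_left (x := h)) (hY2 h) hv.of_uncurry_left (hYv h) s) hδ)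
  intro ω hω Q _ hKL hS hV lam hlam
  have hbound := hω Q ‹_› hKL (integrable_finsetSum _ fun i _ => hS i)
    (integrable_finsetSum _ fun i _ => hV i) lam hlam
  rw [integral_finsetSum _ fun i _ => hS i, integral_finsetSum _ fun i _ => hV i] at hbound
  rw [abs_mul, abs_of_pos (inv_pos.2 hcard)]
  refine (mul_le_mul_of_nonneg_left hbound (inv_pos.2 hcard).le).trans_eq ?_
  have := hlam.1
  field_simp

end UniformBounds

section FiniteActions

variable {H A : Type*} [MeasurableSpace H] [MeasurableSpace A] [MeasurableSingletonClass A]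

lemma measurable_apply_of_countable {Z : Type*} [MeasurableSpace Z] [Countable A] {F : A → Z → ℝ}
    (hF : ∀ b, Measurable (F b)) {g : H × Z → A} (hg : Measurable g) :
    Measurable fun q => F (g q) q.2 :=
  (measurable_from_prod_countable_left (f := fun q : Z × A => F q.2 q.1) hF).comp
    (measurable_snd.prodMk hg)

lemma integral_ite_eq_measureReal_mul [DecidableEq A] {μ : Measure A} (b : A) (r : ℝ) :
    ∫ a, (if a = b then r else 0) ∂μ = μ.real {b} * r := by
  simpa [Set.indicator_apply] using integral_indicator_const (μ := μ) r (measurableSet_singleton b)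

variable {Q : Measure H} {g : H → A}

lemma integrable_comp_of_finite [Finite A] [IsFiniteMeasure Q] (hg : Measurable g) (f : A → ℝ) :
    Integrable (fun h => f (g h)) Q :=
  (Integrable.of_finite (μ := Q.map g) (f := f)).comp_measurable hg

variable [Fintype A]

lemma integral_comp_eq_sum_measureReal [IsFiniteMeasure Q] (hg : Measurable g) (f : A → ℝ) :
    ∫ h, f (g h) ∂Q = ∑ a, Q.real {h | g h = a} * f a := by
  rw [← integral_map (φ := g) hg.aemeasurable .of_discrete, integral_fintype .of_finite]
  refine Finset.sum_congr rfl fun a _ => ?_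
  rw [map_measureReal_apply hg (measurableSet_singleton a), smul_eq_mul]
  rfl

lemma sum_measureReal_eq_one [IsProbabilityMeasure Q] (hg : Measurable g) :
    ∑ a, Q.real {h | g h = a} = 1 := by
  simpa using (integral_comp_eq_sum_measureReal (Q := Q) hg fun _ => 1).symm

end FiniteActions

section Policies

variable {X A ι : Type*}

/-- The risk `R(π)` of the policy `π` for contexts distributed as `ν`. -/
noncomputable def policyRisk [MeasurableSpace X] [Fintype A] (ν : Measure X) (c pol : X → A → ℝ) :
    ℝ :=
  ∫ x, ∑ a, pol x a * c x a ∂ν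

/-- The smoothed importance-weighted estimate `R̂ₙ^α(π)` of the risk of `π` from the logged pairs
`ω i = (xᵢ, aᵢ)`, where `p` holds the propensities of the logging policy. -/
noncomputable def ipsRisk [Fintype ι] (p c : X → A → ℝ) (α : ℝ) (pol : X → A → ℝ) (ω : ι → X × A) :
    ℝ :=
  (Fintype.card ι : ℝ)⁻¹ * ∑ i, c (ω i).1 (ω i).2 * pol (ω i).1 (ω i).2 / p (ω i).1 (ω i).2 ^ α

/-- The empirical bound `Bₙ^α(π)` on the bias of `ipsRisk`. -/
noncomputable def ipsBias [Fintype ι] [Fintype A] (p : X → A → ℝ) (α : ℝ) (pol : X → A → ℝ)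
    (ω : ι → X × A) : ℝ :=
  1 - (Fintype.card ι : ℝ)⁻¹ * ∑ i, ∑ a, pol (ω i).1 a * p (ω i).1 a ^ (1 - α)

/-- The empirical second-order term `V̄ₙ^α(π)`. -/
noncomputable def ipsVariance [Fintype ι] [Fintype A] (p c : X → A → ℝ) (α : ℝ) (pol : X → A → ℝ)
    (ω : ι → X × A) : ℝ :=
  (Fintype.card ι : ℝ)⁻¹ * ∑ i, ((∑ a, p (ω i).1 a * (pol (ω i).1 a / p (ω i).1 a ^ (2 * α)))
    + pol (ω i).1 (ω i).2 * c (ω i).1 (ω i).2 ^ 2 / p (ω i).1 (ω i).2 ^ (2 * α))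

/-- The policy `π_Q` that draws `h` from `Q` and plays `ev h x` in the context `x`. -/
noncomputable def inducedPolicy {H : Type*} [MeasurableSpace H] (Q : Measure H) (ev : H → X → A)
    (x : X) (a : A) : ℝ :=
  Q.real {h | ev h x = a}

/-- The importance-weighted estimate of the cost of the action `b`, computed from the logged pair
`z`; averaging it over `b` drawn from `π` and over the sample gives `ipsRisk`. -/
noncomputable def ipsCost [DecidableEq A] (p c : X → A → ℝ) (α : ℝ) (b : A) (z : X × A) : ℝ :=
  if z.2 = b then c z.1 b / p z.1 b ^ α else 0

lemma ipsCost_sq [DecidableEq A] {p c : X → A → ℝ} {α : ℝ} {z : X × A}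
    {b : A} (hp : 0 < p z.1 b) :
    ipsCost p c α b z ^ 2 = if z.2 = b then c z.1 b ^ 2 / p z.1 b ^ (2 * α) else 0 := by
  rw [ipsCost, ite_pow, div_pow, ← rpow_mul_natCast hp.le, mul_comm α]
  norm_num

lemma abs_sum_mul_sub_sum_mul_le [Fintype A] {w c q : A → ℝ} (hw : ∀ a, 0 ≤ w a)
    (hsum : ∑ a, w a = 1) (hc : ∀ a, |c a| ≤ 1) (hq : ∀ a, q a ≤ 1) :
    |∑ a, w a * c a - ∑ a, w a * (c a * q a)| ≤ 1 - ∑ a, w a * q a := by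
  calc |∑ a, w a * c a - ∑ a, w a * (c a * q a)| = |∑ a, w a * (c a * (1 - q a))| := by
        rw [← Finset.sum_sub_distrib]
        ring_nf
    _ ≤ ∑ a, |w a * (c a * (1 - q a))| := Finset.abs_sum_le_sum_abs _ _
    _ ≤ ∑ a, w a * (1 - q a) := by
        refine Finset.sum_le_sum fun a _ => ?_
        rw [abs_mul, abs_mul, abs_of_nonneg (hw a), abs_of_nonneg (sub_nonneg.2 (hq a))]
        exact mul_le_mul_of_nonneg_left
          (mul_le_of_le_one_left (sub_nonneg.2 (hq a)) (hc a)) (hw a)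
    _ = 1 - ∑ a, w a * q a := by simp only [mul_sub, mul_one, Finset.sum_sub_distrib, hsum]

lemma abs_policyRisk_sub_ipsRisk_le [Fintype ι] [Nonempty ι] [Fintype A] [MeasurableSpace X]
    (ν : Measure X) {p c pol : X → A → ℝ} {α : ℝ} (hp : ∀ x a, 0 ≤ p x a)
    (hp1 : ∀ x a, p x a ≤ 1) (hc : ∀ x a, |c x a| ≤ 1) (hα : α ≤ 1)
    (hpol : ∀ x a, 0 ≤ pol x a) (hpol1 : ∀ x, ∑ a, pol x a = 1) (ω : ι → X × A) :
    |policyRisk ν c pol - ipsRisk p c α pol ω|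
      ≤ |(Fintype.card ι : ℝ)⁻¹ * ∑ i, ∑ a, pol (ω i).1 a * c (ω i).1 a - policyRisk ν c pol|
        + ipsBias p α pol ω
        + |(Fintype.card ι : ℝ)⁻¹ * ∑ i,
            (c (ω i).1 (ω i).2 * pol (ω i).1 (ω i).2 / p (ω i).1 (ω i).2 ^ α
              - ∑ a, pol (ω i).1 a * (c (ω i).1 a * p (ω i).1 a ^ (1 - α)))| := by
  set n : ℝ := (Fintype.card ι : ℝ)
  set E : ℝ := n⁻¹ * ∑ i, ∑ a, pol (ω i).1 a * c (ω i).1 a with hE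
  set M : ℝ := n⁻¹ * ∑ i, ∑ a, pol (ω i).1 a * (c (ω i).1 a * p (ω i).1 a ^ (1 - α)) with hM
  have hn : n ≠ 0 := Nat.cast_ne_zero.2 Fintype.card_ne_zero
  have hbias : |E - M| ≤ ipsBias p α pol ω := by
    calc |E - M| ≤ n⁻¹ * ∑ i, (1 - ∑ a, pol (ω i).1 a * p (ω i).1 a ^ (1 - α)) := by
          rw [hE, hM, ← mul_sub, ← Finset.sum_sub_distrib, abs_mul,
            abs_of_nonneg (by positivity : 0 ≤ n⁻¹)]
          gcongr
          refine (Finset.abs_sum_le_sum_abs _ _).trans (Finset.sum_le_sum fun i _ => ?_)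
          exact abs_sum_mul_sub_sum_mul_le (hpol _) (hpol1 _) (hc _)
            fun a => rpow_le_one (hp _ a) (hp1 _ a) (sub_nonneg.2 hα)
      _ = ipsBias p α pol ω := by
          rw [Finset.sum_sub_distrib, mul_sub]
          simp [ipsBias, n, hn]
  have hsplit : policyRisk ν c pol - ipsRisk p c α pol ω
      = -(E - policyRisk ν c pol) + (E - M) + -(ipsRisk p c α pol ω - M) := by ring
  rw [Finset.sum_sub_distrib, mul_sub]
  change _ ≤ |E - policyRisk ν c pol| + ipsBias p α pol ω + |ipsRisk p c α pol ω - M|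
  have htri := abs_add_three (-(E - policyRisk ν c pol)) (E - M) (-(ipsRisk p c α pol ω - M))
  rw [← hsplit, abs_neg, abs_neg] at htri
  linarith

end Policies

section Bandit

variable {X A H : Type*} [MeasurableSpace A] [MeasurableSingletonClass A] [MeasurableSpace H]
  {p c : X → A → ℝ} {α : ℝ}

section Logging

variable [MeasurableSpace X] {κ : Kernel X A}

lemma measurable_ipsCost [DecidableEq A] (hpm : ∀ a, Measurable fun x => p x a)
    (hcm : ∀ a, Measurable fun x => c x a) (b : A) : Measurable (ipsCost p c α b) :=
  .ite (measurable_snd (measurableSet_singleton b))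
    (((hcm b).comp measurable_fst).div (((hpm b).comp measurable_fst).pow_const α))
    measurable_const

lemma integral_ipsCost [DecidableEq A] (hp : ∀ x a, 0 < p x a)
    (hκ : ∀ x a, (κ x).real {a} = p x a) (b : A) (x : X) :
    ∫ a, ipsCost p c α b (x, a) ∂κ x = c x b * p x b ^ (1 - α) := by
  simp only [ipsCost, integral_ite_eq_measureReal_mul, hκ]
  rw [rpow_sub (hp x b), rpow_one]
  ring

lemma integral_ipsCost_sq_le [DecidableEq A] (hp : ∀ x a, 0 < p x a)
    (hκ : ∀ x a, (κ x).real {a} = p x a) (hc : ∀ x a, |c x a| ≤ 1) (b : A) (x : X) :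
    ∫ a, ipsCost p c α b (x, a) ^ 2 ∂κ x ≤ p x b / p x b ^ (2 * α) := by
  have hpb := hp x b
  simp only [ipsCost_sq (hp _ _), integral_ite_eq_measureReal_mul, hκ]
  rw [← mul_div_assoc]
  gcongr
  exact mul_le_of_le_one_right hpb.le ((sq_le_one_iff_abs_le_one _).2 (hc x b))

end Logging

section Posterior

variable [Fintype A] {Q : Measure H} [IsProbabilityMeasure Q] {ev : H → X → A}

lemma integral_ipsCost_sub [DecidableEq A] {z : X × A} (hev : Measurable fun h => ev h z.1) :
    ∫ h, (ipsCost p c α (ev h z.1) z - c z.1 (ev h z.1) * p z.1 (ev h z.1) ^ (1 - α)) ∂Q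
      = c z.1 z.2 * inducedPolicy Q ev z.1 z.2 / p z.1 z.2 ^ α
        - ∑ a, inducedPolicy Q ev z.1 a * (c z.1 a * p z.1 a ^ (1 - α)) := by
  rw [integral_comp_eq_sum_measureReal hev
    fun a => ipsCost p c α a z - c z.1 a * p z.1 a ^ (1 - α)]
  simp only [mul_sub, Finset.sum_sub_distrib, ipsCost, mul_ite, mul_zero, Finset.sum_ite_eq,
    Finset.mem_univ, if_true, inducedPolicy]
  ring

lemma integral_ipsCost_sq_add [DecidableEq A] {z : X × A} (hp : ∀ a, 0 < p z.1 a)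
    (hev : Measurable fun h => ev h z.1) :
    ∫ h, (ipsCost p c α (ev h z.1) z ^ 2 + p z.1 (ev h z.1) / p z.1 (ev h z.1) ^ (2 * α)) ∂Q
      = (∑ a, p z.1 a * (inducedPolicy Q ev z.1 a / p z.1 a ^ (2 * α)))
        + inducedPolicy Q ev z.1 z.2 * c z.1 z.2 ^ 2 / p z.1 z.2 ^ (2 * α) := by
  rw [integral_comp_eq_sum_measureReal hev
    fun a => ipsCost p c α a z ^ 2 + p z.1 a / p z.1 a ^ (2 * α)]
  simp only [mul_add, Finset.sum_add_distrib, ipsCost_sq (hp _), mul_ite, mul_zero,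
    Finset.sum_ite_eq, Finset.mem_univ, if_true, inducedPolicy, mul_div_left_comm (p z.1 _)]
  rw [add_comm, mul_div_assoc]

lemma integral_sampleMean_sub_eq {ι : Type*} [Fintype ι] [MeasurableSpace X] {ν : Measure X}
    [IsProbabilityMeasure ν] {κ : Kernel X A} [IsMarkovKernel κ]
    (hev : Measurable (Function.uncurry ev)) (hcm : ∀ a, Measurable fun x => c x a)
    {lo hi : ℝ} (hc : ∀ x a, c x a ∈ Set.Icc lo hi) (ω : ι → X × A) :
    ∫ h, ((Fintype.card ι : ℝ)⁻¹ * ∑ i, c (ω i).1 (ev h (ω i).1)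
        - ∫ z, c z.1 (ev h z.1) ∂(ν ⊗ₘ κ)) ∂Q
      = (Fintype.card ι : ℝ)⁻¹ * ∑ i, ∑ a, inducedPolicy Q ev (ω i).1 a * c (ω i).1 a
        - policyRisk ν c (inducedPolicy Q ev) := by
  have hcost : Measurable fun q : H × X => c q.2 (ev q.1 q.2) :=
    measurable_apply_of_countable (F := fun a x => c x a) hcm hev
  have hint : Integrable (fun q : H × X => c q.2 (ev q.1 q.2)) (Q.prod ν) :=
    .of_mem_Icc lo hi hcost.aemeasurable (.of_forall fun q => hc _ _)
  have hcoord (i : ι) : Integrable (fun h => c (ω i).1 (ev h (ω i).1)) Q :=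
    integrable_comp_of_finite hev.of_uncurry_right _
  have hrisk (h : H) : ∫ z, c z.1 (ev h z.1) ∂(ν ⊗ₘ κ) = ∫ x, c x (ev h x) ∂ν := by
    conv_rhs => rw [← Measure.fst_compProd ν κ, Measure.fst]
    exact (integral_map measurable_fst.aemeasurable
      (hcost.comp measurable_prodMk_left).aestronglyMeasurable).symm
  simp only [hrisk]
  rw [integral_sub ((integrable_finsetSum _ fun i _ => hcoord i).const_mul _)
    hint.integral_prod_left, integral_const_mul, integral_finsetSum _ fun i _ => hcoord i,
    integral_integral_swap hint]
  simp only [integral_comp_eq_sum_measureReal hev.of_uncurry_right, policyRisk, inducedPolicy]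

end Posterior

end Bandit

section PolicyBounds

variable {X A H ι : Type*} [MeasurableSpace X] [MeasurableSpace A] [MeasurableSingletonClass A]
  [Fintype A] [MeasurableSpace H] [Fintype ι] [Nonempty ι] {ν : Measure X}
  [IsProbabilityMeasure ν] {κ : Kernel X A} [IsMarkovKernel κ] {p c : X → A → ℝ}
  {ev : H → X → A} (P : Measure H) [IsProbabilityMeasure P]

lemma measure_compl_forall_abs_sampleMean_sub_policyRisk_le
    (hev : Measurable (Function.uncurry ev)) (hcm : ∀ a, Measurable fun x => c x a)
    {lo : ℝ} (hc : ∀ x a, c x a ∈ Set.Icc lo (lo + 1)) {δ : ℝ} (hδ : 0 < δ) :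
    (Measure.pi fun _ : ι => ν ⊗ₘ κ) {ω | ∀ Q : Measure H, IsProbabilityMeasure Q →
      InformationTheory.klDiv Q P ≠ ⊤ →
      |(Fintype.card ι : ℝ)⁻¹ * ∑ i, ∑ a, inducedPolicy Q ev (ω i).1 a * c (ω i).1 a
          - policyRisk ν c (inducedPolicy Q ev)|
        ≤ √(((InformationTheory.klDiv Q P).toReal + log (4 * √(Fintype.card ι) / δ))
          / (2 * Fintype.card ι))}ᶜ ≤ ENNReal.ofReal δ := by
  have hcost : Measurable fun q : H × X × A => c q.2.1 (ev q.1 q.2.1) :=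
    (measurable_apply_of_countable (F := fun a x => c x a) hcm hev).comp
      (measurable_fst.prodMk measurable_snd.fst)
  refine (measure_mono (Set.compl_subset_compl.2 ?_)).trans
    (measure_compl_forall_abs_integral_sampleMean_sub_le (ι := ι) (μ := ν ⊗ₘ κ) P
      (ℓ := fun h z => c z.1 (ev h z.1)) hcost (fun h z => hc _ _) hδ)
  intro ω hω Q _ hKL
  rw [← integral_sampleMean_sub_eq (κ := κ) hev hcm hc]
  exact hω Q ‹_› hKL

lemma measure_compl_forall_abs_importanceWeighted_sub_le
    (hp : ∀ x a, 0 < p x a) (hκ : ∀ x a, (κ x).real {a} = p x a)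
    (hev : Measurable (Function.uncurry ev)) (hcm : ∀ a, Measurable fun x => c x a)
    (hc : ∀ x a, |c x a| ≤ 1) (α : ℝ) {δ : ℝ} (hδ : δ ∈ Set.Ioc 0 1) :
    (Measure.pi fun _ : ι => ν ⊗ₘ κ) {ω | ∀ Q : Measure H, IsProbabilityMeasure Q →
      InformationTheory.klDiv Q P ≠ ⊤ → ∀ lam ∈ Set.Ioc (0 : ℝ) 1,
      |(Fintype.card ι : ℝ)⁻¹ * ∑ i,
          (c (ω i).1 (ω i).2 * inducedPolicy Q ev (ω i).1 (ω i).2 / p (ω i).1 (ω i).2 ^ α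
            - ∑ a, inducedPolicy Q ev (ω i).1 a * (c (ω i).1 a * p (ω i).1 a ^ (1 - α)))|
        ≤ 2 * ((InformationTheory.klDiv Q P).toReal + log (4 / (δ * lam))) / (Fintype.card ι * lam)
          + lam / 2 * ipsVariance p c α (inducedPolicy Q ev) ω}ᶜ
      ≤ ENNReal.ofReal δ := by
  classical
  have hpm (a : A) : Measurable fun x => p x a := by
    simpa only [measureReal_def, ← hκ] using
      (κ.measurable_coe (measurableSet_singleton a)).ennreal_toReal
  have hYm : Measurable fun q : H × X × A => ipsCost p c α (ev q.1 q.2.1) q.2 :=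
    measurable_apply_of_countable (F := ipsCost p c α) (measurable_ipsCost hpm hcm)
      (hev.comp (measurable_fst.prodMk measurable_snd.fst))
  refine (measure_mono (Set.compl_subset_compl.2 ?_)).trans
    (measure_compl_forall_scale_abs_integral_sampleMean_le (ι := ι) (ν := ν) (κ := κ) P
      (Y := fun h z => ipsCost p c α (ev h z.1) z)
      (m := fun h x => c x (ev h x) * p x (ev h x) ^ (1 - α))
      (v := fun h x => p x (ev h x) / p x (ev h x) ^ (2 * α)) hYm
      (measurable_apply_of_countable (F := fun a x => c x a * p x a ^ (1 - α))
        (fun a => (hcm a).mul ((hpm a).pow_const _)) hev)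
      (measurable_apply_of_countable (F := fun a x => p x a / p x a ^ (2 * α))
        (fun a => (hpm a).div ((hpm a).pow_const _)) hev)
      (fun h x => .of_discrete) (fun h x => integral_ipsCost hp hκ (ev h x) x)
      (fun h x => integral_ipsCost_sq_le hp hκ hc (ev h x) x) hδ)
  intro ω hω Q _ hKL lam hlam
  have hevω (i : ι) : Measurable fun h => ev h (ω i).1 := hev.of_uncurry_right
  have hbound := hω Q ‹_› hKL
    (fun i => integrable_comp_of_finite (hevω i)
      fun a => ipsCost p c α a (ω i) - c (ω i).1 a * p (ω i).1 a ^ (1 - α))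
    (fun i => integrable_comp_of_finite (hevω i)
      fun a => ipsCost p c α a (ω i) ^ 2 + p (ω i).1 a / p (ω i).1 a ^ (2 * α)) lam hlam
  simpa only [integral_ipsCost_sub (hevω _), integral_ipsCost_sq_add (hp _) (hevω _),
    ipsVariance] using hbound

end PolicyBounds

lemma klDiv_eq_informationTheory_klDiv {H : Type*} [MeasurableSpace H] (Q P : Measure H)
    [IsProbabilityMeasure Q] [IsProbabilityMeasure P] :
    klDiv Q P = InformationTheory.klDiv Q P := by
  classical
  simp [klDiv, InformationTheory.klDiv]

theorem pac_bayes_ips_alpha_uniform_lambda_general {X A H ι : Type*} [MeasurableSpace X]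
    [MeasurableSpace A] [MeasurableSingletonClass A] [Fintype A] [MeasurableSpace H] [Fintype ι]
    [Nonempty ι] (ν : Measure X) [IsProbabilityMeasure ν] (κ : Kernel X A) [IsMarkovKernel κ]
    {p c : X → A → ℝ} (hp : ∀ x a, 0 < p x a) (hκ : ∀ x a, (κ x).real {a} = p x a)
    (hcm : ∀ a, Measurable fun x => c x a) {lo : ℝ} (hlo : lo ∈ Set.Icc (-1) 0)
    (hc : ∀ x a, c x a ∈ Set.Icc lo (lo + 1)) {ev : H → X → A}
    (hev : Measurable (Function.uncurry ev)) (P : Measure H) [IsProbabilityMeasure P]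
    {δ : ℝ} (hδ : δ ∈ Set.Ioo 0 1) {α : ℝ} (hα : α ≤ 1) :
    ENNReal.ofReal (1 - δ) ≤ (Measure.pi fun _ : ι => ν ⊗ₘ κ)
      {ω | ∀ Q : Measure H, IsProbabilityMeasure Q → InformationTheory.klDiv Q P ≠ ⊤ →
        ∀ lam ∈ Set.Ioc (0 : ℝ) 1,
        |policyRisk ν c (inducedPolicy Q ev) - ipsRisk p c α (inducedPolicy Q ev) ω|
          ≤ √(((InformationTheory.klDiv Q P).toReal
              + log (8 * √(Fintype.card ι) / (δ * lam))) / (2 * Fintype.card ι))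
            + ipsBias p α (inducedPolicy Q ev) ω
            + 2 * ((InformationTheory.klDiv Q P).toReal + log (8 / (δ * lam)))
                / (Fintype.card ι * lam)
            + lam / 2 * ipsVariance p c α (inducedPolicy Q ev) ω} := by
  have hc1 (x : X) (a : A) : |c x a| ≤ 1 :=
    abs_le.2 ⟨hlo.1.trans (hc x a).1, (hc x a).2.trans (by linarith [hlo.2])⟩
  have hδ2 : δ / 2 ∈ Set.Ioc 0 1 := ⟨half_pos hδ.1, by linarith [hδ.2]⟩
  have hmean := measure_compl_forall_abs_sampleMean_sub_policyRisk_le (ι := ι) (ν := ν) (κ := κ)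
    P hev hcm hc hδ2.1
  have hweighted := measure_compl_forall_abs_importanceWeighted_sub_le (ι := ι) (ν := ν) P
    hp hκ hev hcm hc1 α hδ2
  have hinter := ofReal_one_sub_add_le_measure_inter hδ2.1.le hδ2.1.le hmean hweighted
  rw [add_halves] at hinter
  refine hinter.trans (measure_mono ?_)
  rintro ω ⟨hωmean, hωweighted⟩ Q _ hKL lam hlam
  have hdecomp := abs_policyRisk_sub_ipsRisk_le ν (fun x a => (hp x a).le)
    (fun x a => hκ x a ▸ measureReal_le_one) hc1 hα (pol := inducedPolicy Q ev)
    (fun x a => measureReal_nonneg) (fun x => sum_measureReal_eq_one hev.of_uncurry_right) ω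
  have hlog : log (4 * √(Fintype.card ι) / (δ / 2)) ≤ log (8 * √(Fintype.card ι) / (δ * lam)) := by
    have hδ0 := hδ.1
    have hlam0 := hlam.1
    refine log_le_log (by positivity) ?_
    calc 4 * √(Fintype.card ι) / (δ / 2) = 8 * √(Fintype.card ι) / δ := by ring
      _ ≤ 8 * √(Fintype.card ι) / (δ * lam) := by
          gcongr
          exact mul_le_of_le_one_right hδ0.le hlam.2
  have hsampling := (hωmean Q ‹_› hKL).trans (sqrt_le_sqrt
    (div_le_div_of_nonneg_right (add_le_add le_rfl hlog) (by positivity)))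
  have hweighting := hωweighted Q ‹_› hKL lam hlam
  rw [show 4 / (δ / 2 * lam) = 8 / (δ * lam) by ring] at hweighting
  linarith

/-- **Extension of the main theorem, uniform in `λ`.**  With probability at least `1 − δ`
over the logged data, the two-sided PAC-Bayes bound holds simultaneously for all posteriors
`Q` on `H` (with finite KL divergence to the prior) and all `λ ∈ (0,1)`. -/
theorem pac_bayes_ips_alpha_uniform_lambda
    {X : Type*} [MeasurableSpace X] {K : ℕ}
    {H : Type*} [MeasurableSpace H]
    (ν : Measure X) [IsProbabilityMeasure ν]
    (p0 c : X → Fin K → ℝ)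
    (hp0meas : ∀ a, Measurable fun x => p0 x a)
    (hcmeas : ∀ a, Measurable fun x => c x a)
    (hp0pos : ∀ x a, 0 < p0 x a) (hp0sum : ∀ x, ∑ a, p0 x a = 1)
    (hc : ∀ x a, c x a ∈ Set.Icc (-1 : ℝ) 0)
    (ev : H → X → Fin K)
    (hev : Measurable fun q : H × X => ev q.1 q.2)
    (κ0 : Kernel X (Fin K)) [IsMarkovKernel κ0]
    (hκ0 : ∀ x a, κ0 x {a} = ENNReal.ofReal (p0 x a))
    (P : Measure H) [IsProbabilityMeasure P]
    (n : ℕ) (hn : 1 ≤ n)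
    (δ : ℝ) (hδ : δ ∈ Set.Ioo (0 : ℝ) 1) (α : ℝ) (hα : α ∈ Set.Icc (0 : ℝ) 1) :
    ENNReal.ofReal (1 - δ) ≤
      (Measure.pi fun _ : Fin n => ν ⊗ₘ κ0)
        {ω | ∀ Q : Measure H, IsProbabilityMeasure Q → klDiv Q P ≠ ⊤ →
          ∀ lam : ℝ, lam ∈ Set.Ioo (0 : ℝ) 1 →
          |(∫ x, ∑ a, (Q {h | ev h x = a}).toReal * c x a ∂ν)
              - (n : ℝ)⁻¹ * ∑ i, c (ω i).1 (ω i).2 * (Q {h | ev h (ω i).1 = (ω i).2}).toReal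
                  / p0 (ω i).1 (ω i).2 ^ α|
            ≤ Real.sqrt (((klDiv Q P).toReal + Real.log (8 * Real.sqrt n / (δ * lam)))
                  / (2 * n))
              + (1 - (n : ℝ)⁻¹ * ∑ i, ∑ a,
                  (Q {h | ev h (ω i).1 = a}).toReal * p0 (ω i).1 a ^ (1 - α))
              + 2 * ((klDiv Q P).toReal + Real.log (8 / (δ * lam))) / (n * lam)
              + lam / 2 * ((n : ℝ)⁻¹ * ∑ i,
                  ((∑ a, p0 (ω i).1 a *
                      ((Q {h | ev h (ω i).1 = a}).toReal / p0 (ω i).1 a ^ (2 * α)))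
                    + (Q {h | ev h (ω i).1 = (ω i).2}).toReal * c (ω i).1 (ω i).2 ^ 2
                        / p0 (ω i).1 (ω i).2 ^ (2 * α)))} := by
  have : Nonempty (Fin n) := ⟨⟨0, hn⟩⟩
  have hκ (x : X) (a : Fin K) : (κ0 x).real {a} = p0 x a := by
    rw [measureReal_def, hκ0, ENNReal.toReal_ofReal (hp0pos x a).le]
  refine (pac_bayes_ips_alpha_uniform_lambda_general (ι := Fin n) ν κ0 hp0pos hκ hcmeas
    (lo := -1) (by simp) (by simpa using hc) hev P hδ hα.2).trans (measure_mono ?_)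
  intro ω hω Q _ hKL lam hlam
  rw [klDiv_eq_informationTheory_klDiv] at hKL ⊢
  simpa only [policyRisk, ipsRisk, ipsBias, ipsVariance, inducedPolicy, measureReal_def,
    Fintype.card_fin] using hω Q ‹_› hKL lam (Set.Ioo_subset_Ioc_self hlam)
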